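/- arXiv:2409.07285 — 2 statements merged into one kernel-verified Lean document; each statement's English description precedes it below -/
import Mathlib

section
/- Let Γ be a set of Sym(ℚ)-invariant valued relations on ℚ, and suppose there is an injective binary operation g : ℚ² → ℚ that does not improve some relation of Γ. Then the valued relation (=)₀¹ (value 0 if x = y, value 1 if x ≠ y) belongs to ⟨Γ ∪ {≠}⟩, or the crisp relation Dis belongs to ⟨Γ ∪ {≠}⟩, where ≠ denotes the crisp binary disequality relation on ℚ. -/
/-! The value of a `Sym(ℚ)`-invariant relation `R` at a tuple depends only on the kernel of the
tuple (the equivalence relation of positions carrying equal entries), because a bijection between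
finite subsets of `ℚ` extends to a permutation (`exists_perm_of_ker`). An injective binary
operation `g` realises the intersection of kernels: `ker (g (s, t)) = ker s ∩ ker t`.

Suppose first that some `R ∈ Γ` has tuples `u`, `v` with `ker v ⊆ ker u` and `R u < R v < ∞`
(`clone_soft_eq`). Take `ker u` minimal for the given `v`, and restrict `R` by equalities and
disequalities to the tuples whose kernel lies between `ker v` and `ker u`. By minimality every such
tuple has value at least `R v`, unless its kernel is `ker u`. Projecting to two positions `i`, `j`
with `u i = u j` and `v i ≠ v j` gives the value `R u` on `=` and `R v` on `≠`, which becomes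
`(=)₀¹` after shifting and scaling.

Otherwise, a failure of improvement yields a feasible pair `s`, `t` for which `g (s, t)` is not
feasible (`clone_dis`). Choose such a pair with `N = ker s ∩ ker t` as large as possible and then
`ker s`, `ker t` as small as possible. Restrict the feasibility relation to the tuples `u` with
`N ⊆ ker u ⊆ ker s ∪ ker t`. The choice forces `ker s ⊆ ker u` or `ker t ⊆ ker u` for each of
these. If there are positions `a, b, c` with `s a = s b`, `t a ≠ t b`, `t b = t c`, `s b ≠ s c`,
then projecting to them and adding `x ≠ z` gives `Dis`. If there are none, one obtains a `4`-ary
relation `T` which implies `x = y ∨ u = v` and contains all tuples in which exactly one of these two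
equalities, and no other equality, holds. Then `Dis (x, y, z)` is defined by
`∃ a b c, T (x, y, a, b) ∧ T (y, z, b, c) ∧ a ≠ c ∧ x ≠ z` (`clone_dis_of_four`). -/

open Classical

/-- A valued relation of arity `k` on `ℚ`. -/
abbrev VRel (k : ℕ) : Type := (Fin k → ℚ) → WithTop ℚ

/-- The crisp valued relation associated to a set of tuples: `0` on the set, `∞` off it. -/
noncomputable def crisp {k : ℕ} (S : Set (Fin k → ℚ)) : VRel k :=
  fun t => if t ∈ S then 0 else ⊤

/-- A unary operation improves a valued relation. -/
def Improves1 (f : ℚ → ℚ) {k : ℕ} (R : VRel k) : Prop :=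
  ∀ t : Fin k → ℚ, R (fun i => f (t i)) ≤ R t

/-- A binary operation improves a valued relation: `2·R(g(s,t)) ≤ R(s) + R(t)`. -/
def Improves2 (g : ℚ → ℚ → ℚ) {k : ℕ} (R : VRel k) : Prop :=
  ∀ s t : Fin k → ℚ, 2 • R (fun i => g (s i) (t i)) ≤ R s + R t

/-- A valued relation is temporal if it is invariant under all order-preserving
bijections of `ℚ`. -/
def Temporal {k : ℕ} (R : VRel k) : Prop :=
  ∀ α : ℚ → ℚ, Function.Bijective α → StrictMono α →
    ∀ t : Fin k → ℚ, R (fun i => α (t i)) = R t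

/-- A valued relation is `Sym(ℚ)`-invariant if it is invariant under all bijections of `ℚ`. -/
def SymInvariant {k : ℕ} (R : VRel k) : Prop :=
  ∀ α : ℚ → ℚ, Function.Bijective α →
    ∀ t : Fin k → ℚ, R (fun i => α (t i)) = R t

/-- The valued relational clone generated by a set `Γ` of valued relations on `ℚ`:
the smallest set of valued relations containing `Γ`, crisp equality and the crisp empty
unary relation, closed under sums of atomic expressions, projection (infimum over extra
coordinates), shifting, nonnegative scaling, `Feas` and `Opt`. -/
inductive Clone (Γ : Set ((k : ℕ) × VRel k)) : {k : ℕ} → VRel k → Prop where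
  | base {k : ℕ} {R : VRel k} : Sigma.mk k R ∈ Γ → Clone Γ R
  | eqRel : Clone Γ (crisp {t : Fin 2 → ℚ | t 0 = t 1})
  | emptyRel : Clone Γ (crisp (∅ : Set (Fin 1 → ℚ)))
  | sum {m n : ℕ} {k : Fin m → ℕ} {R : ∀ i : Fin m, VRel (k i)}
      (σ : ∀ i : Fin m, Fin (k i) → Fin n) :
      (∀ i : Fin m, Clone Γ (R i)) →
      Clone Γ (fun x : Fin n → ℚ => ∑ i : Fin m, R i (fun j => x (σ i j)))
  | proj {k n : ℕ} {R : VRel (k + n)} {R' : VRel k} :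
      Clone Γ R →
      (∀ s : Fin k → ℚ,
        IsGLB {v : WithTop ℚ | ∃ t : Fin n → ℚ, v = R (Fin.append s t)} (R' s)) →
      Clone Γ R'
  | shift {k : ℕ} {R : VRel k} (c : ℚ) :
      Clone Γ R → Clone Γ (fun t => R t + (c : WithTop ℚ))
  | scale {k : ℕ} {R : VRel k} (q : ℚ) (hq : 0 ≤ q) :
      Clone Γ R → Clone Γ (fun t => (q : WithTop ℚ) * R t)
  | feas {k : ℕ} {R : VRel k} :
      Clone Γ R → Clone Γ (fun t => if R t ≠ ⊤ then 0 else ⊤)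
  | opt {k : ℕ} {R : VRel k} :
      Clone Γ R → Clone Γ (fun t => if R t ≠ ⊤ ∧ ∀ s, R t ≤ R s then 0 else ⊤)

/-- The crisp binary order relation `<` on `ℚ`. -/
def LtS : Set (Fin 2 → ℚ) := {t | t 0 < t 1}

/-- The crisp binary disequality relation on `ℚ`. -/
def NeS : Set (Fin 2 → ℚ) := {t | t 0 ≠ t 1}

def BetwS : Set (Fin 3 → ℚ) :=
  {t | (t 0 < t 1 ∧ t 1 < t 2) ∨ (t 2 < t 1 ∧ t 1 < t 0)}

def CycS : Set (Fin 3 → ℚ) :=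
  {t | (t 0 < t 1 ∧ t 1 < t 2) ∨ (t 1 < t 2 ∧ t 2 < t 0) ∨ (t 2 < t 0 ∧ t 0 < t 1)}

/-- `c` lies strictly between `a` and `b`. -/
def StrictBetween (a b c : ℚ) : Prop := (a < c ∧ c < b) ∨ (b < c ∧ c < a)

def SepS : Set (Fin 4 → ℚ) :=
  {t | Function.Injective t ∧
    Xor' (StrictBetween (t 0) (t 1) (t 2)) (StrictBetween (t 0) (t 1) (t 3))}

def T3S : Set (Fin 3 → ℚ) :=
  {t | (t 0 = t 1 ∧ t 1 < t 2) ∨ (t 0 = t 2 ∧ t 2 < t 1)}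

def NegT3S : Set (Fin 3 → ℚ) := {t | (fun i => -(t i)) ∈ T3S}

def DisS : Set (Fin 3 → ℚ) :=
  {t | (t 0 = t 1 ∧ t 1 ≠ t 2) ∨ (t 0 ≠ t 1 ∧ t 1 = t 2)}

/-- The binary valued relation `R_{α,β,γ}` on `ℚ`. -/
noncomputable def Rabc (a b c : WithTop ℚ) : VRel 2 :=
  fun t => if t 0 = t 1 then a else if t 0 < t 1 then b else c

/-- A lex-operation on `ℚ`. -/
def IsLex (l : ℚ → ℚ → ℚ) : Prop :=
  ∀ x x' y y' : ℚ, l x y < l x' y' ↔ (x < x' ∨ (x = x' ∧ y < y'))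

/-- The dual of a binary operation on `ℚ`. -/
def dualOp (g : ℚ → ℚ → ℚ) : ℚ → ℚ → ℚ := fun x y => -g (-x) (-y)

/-- Operations of `mx` type. -/
def IsMx (g : ℚ → ℚ → ℚ) : Prop :=
  ∃ ene eeq : ℚ → ℚ, StrictMono ene ∧ StrictMono eeq ∧
    (∀ x ε : ℚ, 0 < ε → ene x < eeq x ∧ eeq x < ene (x + ε)) ∧
    ∀ x y : ℚ, g x y = if x = y then eeq x else ene (min x y)

/-- Operations of `mi` type. -/
def IsMi (g : ℚ → ℚ → ℚ) : Prop :=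
  ∃ elt eeq egt : ℚ → ℚ, StrictMono elt ∧ StrictMono eeq ∧ StrictMono egt ∧
    (∀ x ε : ℚ, 0 < ε → eeq x < egt x ∧ egt x < elt x ∧ elt x < eeq (x + ε)) ∧
    ∀ x y : ℚ, g x y = if x < y then elt x else if x = y then eeq x else egt y

/-- Operations of `lele` type. -/
def IsLele (g : ℚ → ℚ → ℚ) : Prop :=
  ∃ eneg epos : ℚ → ℚ, StrictMono eneg ∧ StrictMono epos ∧
    (∀ x, eneg x < 0) ∧ (∀ x, 0 < epos x) ∧
    ∃ l, IsLex l ∧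
      ∀ x y : ℚ, g x y = if x ≤ 0 then l (eneg x) (eneg y) else l (epos y) (epos x)

/-- A binary operation preserves a crisp relation (given as a set of tuples). -/
def Pres2 (g : ℚ → ℚ → ℚ) {k : ℕ} (S : Set (Fin k → ℚ)) : Prop :=
  ∀ s t : Fin k → ℚ, s ∈ S → t ∈ S → (fun i => g (s i) (t i)) ∈ S

/-- The feasibility relation of a valued relation. -/
def FeasSet {k : ℕ} (R : VRel k) : Set (Fin k → ℚ) := {t | R t ≠ ⊤}

/-- The set of minimal-value feasible tuples of a valued relation. -/
def OptSet {k : ℕ} (R : VRel k) : Set (Fin k → ℚ) := {t | R t ≠ ⊤ ∧ ∀ s, R t ≤ R s}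

/-- `g` preserves every relation of the crisp structure `Γ̂`, consisting of `Feas(R)`
for `R ∈ Γ` and `Opt(R_σ)` for all minors `R_σ` of relations `R ∈ Γ`. -/
def PresHat (g : ℚ → ℚ → ℚ) (Γ : Set ((k : ℕ) × VRel k)) : Prop :=
  ∀ p ∈ Γ, Pres2 g (FeasSet p.2) ∧
    ∀ (n : ℕ) (σ : Fin p.1 → Fin n),
      Pres2 g (OptSet (fun x : Fin n → ℚ => p.2 (fun j => x (σ j))))

/-- `g` is min, max, of mx/mi/lele type, or the dual of an mx/mi/lele type operation. -/
def GoodOp (g : ℚ → ℚ → ℚ) : Prop :=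
  g = (fun x y => min x y) ∨ g = (fun x y => max x y) ∨ IsMx g ∨ IsMi g ∨ IsLele g ∨
    ∃ h, (IsMx h ∨ IsMi h ∨ IsLele h) ∧ g = dualOp h

/-- `g` is the constant-zero binary operation, min, max, or of mx/mi/lele type. -/
def BaseOp (g : ℚ → ℚ → ℚ) : Prop :=
  g = (fun _ _ => (0 : ℚ)) ∨ g = (fun x y => min x y) ∨ g = (fun x y => max x y) ∨
    IsMx g ∨ IsMi g ∨ IsLele g


/-! ### Closure properties of clones -/

section CloneAPI

variable {Γ : Set ((k : ℕ) × VRel k)}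

lemma clone_add {n : ℕ} {R₁ R₂ : VRel n} (h₁ : Clone Γ R₁) (h₂ : Clone Γ R₂) :
    Clone Γ (fun x => R₁ x + R₂ x) := by
  have := Clone.sum (Γ := Γ) (m := 2) (n := n) (k := fun _ => n)
    (R := fun i => if i = 0 then R₁ else R₂) (fun _ j => j)
    (by intro i; fin_cases i <;> simpa)
  simpa [Fin.sum_univ_two] using this

lemma clone_minor {k n : ℕ} {R : VRel k} (h : Clone Γ R) (σ : Fin k → Fin n) :
    Clone Γ (fun x : Fin n → ℚ => R (fun j => x (σ j))) := by
  have := Clone.sum (Γ := Γ) (m := 1) (n := n) (k := fun _ => k)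
    (R := fun _ => R) (fun _ => σ) (fun _ => h)
  simpa using this

lemma clone_univ (n : ℕ) : Clone Γ (crisp (Set.univ : Set (Fin n → ℚ))) := by
  have := Clone.sum (Γ := Γ) (m := 0) (n := n) (k := fun _ => 0)
    (R := fun _ _ => 0) (fun _ j => j.elim0) (fun i => i.elim0)
  have e : (crisp (Set.univ : Set (Fin n → ℚ))) = fun _ => 0 := by
    funext x; simp [crisp]
  rw [e]; simpa using this

lemma clone_inter {n : ℕ} {A B : Set (Fin n → ℚ)} (hA : Clone Γ (crisp A))
    (hB : Clone Γ (crisp B)) : Clone Γ (crisp (A ∩ B)) := by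
  have e : crisp (A ∩ B) = fun x => crisp A x + crisp B x := by
    funext x
    by_cases h1 : x ∈ A <;> by_cases h2 : x ∈ B <;> simp [crisp, h1, h2]
  rw [e]; exact clone_add hA hB

lemma clone_preimage {k n : ℕ} {A : Set (Fin k → ℚ)} (hA : Clone Γ (crisp A))
    (σ : Fin k → Fin n) : Clone Γ (crisp {x : Fin n → ℚ | (fun j => x (σ j)) ∈ A}) :=
  clone_minor hA σ

lemma clone_forall {n : ℕ} {ι : Type*} (F : Finset ι) (A : ι → Set (Fin n → ℚ))
    (hA : ∀ p, Clone Γ (crisp (A p))) :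
    Clone Γ (crisp {x : Fin n → ℚ | ∀ p ∈ F, x ∈ A p}) := by
  induction F using Finset.induction_on with
  | empty =>
    have e : {x : Fin n → ℚ | ∀ p ∈ (∅ : Finset ι), x ∈ A p} = Set.univ := by ext; simp
    rw [e]; exact clone_univ n
  | insert a F _ ih =>
    have e : {x : Fin n → ℚ | ∀ p ∈ insert a F, x ∈ A p}
        = A a ∩ {x : Fin n → ℚ | ∀ p ∈ F, x ∈ A p} := by ext; simp
    rw [e]; exact clone_inter (hA a) ih

lemma clone_eq {n : ℕ} (i j : Fin n) : Clone Γ (crisp {x : Fin n → ℚ | x i = x j}) := by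
  simpa using clone_preimage (Γ := Γ) Clone.eqRel ![i, j]

lemma clone_ne (hne : Clone Γ (crisp NeS)) {n : ℕ} (i j : Fin n) :
    Clone Γ (crisp {x : Fin n → ℚ | x i ≠ x j}) := by
  simpa [NeS] using clone_preimage hne ![i, j]

/-- Projection onto an arbitrary list `τ` of coordinates, possibly with repetitions. -/
lemma clone_proj {k n : ℕ} {R : VRel n} {R' : VRel k} (h : Clone Γ R) (τ : Fin k → Fin n)
    (hR : ∀ s : Fin k → ℚ,
      IsGLB {v : WithTop ℚ | ∃ t : Fin n → ℚ, (∀ i, t (τ i) = s i) ∧ v = R t} (R' s)) :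
    Clone Γ R' := by
  have h1 : Clone Γ (fun y : Fin (k + n) → ℚ => R (fun j => y (Fin.natAdd k j)) +
      crisp {y : Fin (k + n) → ℚ | ∀ i ∈ (Finset.univ : Finset (Fin k)),
        y ∈ {y : Fin (k + n) → ℚ | y (Fin.natAdd k (τ i)) = y (Fin.castAdd n i)}} y) :=
    clone_add (clone_minor h _) (clone_forall _ _ (fun i => clone_eq _ _))
  refine Clone.proj h1 (fun s => ?_)
  obtain ⟨hl, hg⟩ := hR s
  constructor
  · rintro v ⟨t, rfl⟩
    by_cases ht : ∀ i, t (τ i) = s i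
    · simp only [crisp, Finset.mem_univ, true_implies, Set.mem_ofPred_eq, Fin.append_right,
        Fin.append_left, ht, implies_true, if_true, add_zero]
      exact hl ⟨t, ht, rfl⟩
    · simp [crisp, ht]
  · intro b hb
    apply hg
    rintro v ⟨t, ht, rfl⟩
    have := hb ⟨t, rfl⟩
    simpa [crisp, ht] using this

lemma clone_image {k n : ℕ} {A : Set (Fin n → ℚ)} (h : Clone Γ (crisp A)) (τ : Fin k → Fin n) :
    Clone Γ (crisp {s : Fin k → ℚ | ∃ t ∈ A, ∀ i, t (τ i) = s i}) := by
  refine clone_proj h τ (fun s => ?_)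
  by_cases hs : ∃ t ∈ A, ∀ i, t (τ i) = s i
  · obtain ⟨t, ht, hts⟩ := hs
    have e : crisp {s : Fin k → ℚ | ∃ t ∈ A, ∀ i, t (τ i) = s i} s = 0 :=
      if_pos ⟨t, ht, hts⟩
    rw [e]
    constructor
    · rintro v ⟨u, -, rfl⟩
      simp only [crisp]; split_ifs <;> simp
    · intro b hb
      exact hb ⟨t, hts, by simp [crisp, ht]⟩
  · have e : crisp {s : Fin k → ℚ | ∃ t ∈ A, ∀ i, t (τ i) = s i} s = ⊤ := if_neg hs
    rw [e]
    constructor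
    · rintro v ⟨u, hu, rfl⟩
      have : u ∉ A := fun h => hs ⟨u, h, hu⟩
      simp [crisp, this]
    · intro b _; exact le_top

end CloneAPI

/-! ### Kernels of tuples -/

/-- The kernel of a tuple: the pairs of positions carrying equal entries. -/
noncomputable def kerF {k : ℕ} (t : Fin k → ℚ) : Finset (Fin k × Fin k) :=
  Finset.univ.filter (fun p => t p.1 = t p.2)

lemma mem_kerF {k : ℕ} {t : Fin k → ℚ} {i j : Fin k} : (i, j) ∈ kerF t ↔ t i = t j := by
  simp [kerF]

lemma kerF_subset {k : ℕ} {s t : Fin k → ℚ} :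
    kerF s ⊆ kerF t ↔ ∀ i j, s i = s j → t i = t j := by
  constructor
  · intro h i j hij; exact mem_kerF.1 (h (mem_kerF.2 hij))
  · rintro h ⟨i, j⟩ hij; exact mem_kerF.2 (h i j (mem_kerF.1 hij))

lemma exists_perm_of_ker {k : ℕ} {s t : Fin k → ℚ} (h : ∀ i j, s i = s j ↔ t i = t j) :
    ∃ α : ℚ → ℚ, Function.Bijective α ∧ ∀ i, α (s i) = t i := by
  choose c hc using fun x : Set.range s => x.2
  have hct : ∀ i (hi : s i ∈ Set.range s), t (c ⟨s i, hi⟩) = t i :=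
    fun i hi => (h _ _).1 (hc ⟨s i, hi⟩)
  let f : Set.range s ↪ ℚ := ⟨fun x => t (c x), by
    intro x y hxy
    have := (h _ _).2 hxy
    rw [hc, hc] at this
    exact Subtype.ext this⟩
  obtain ⟨e, he⟩ := Cardinal.extend_function_of_lt f
    (by rw [Cardinal.mk_eq_aleph0 ℚ]; exact (Set.finite_range s).lt_aleph0)
    ⟨Equiv.refl ℚ⟩
  refine ⟨e, e.bijective, fun i => ?_⟩
  have := he ⟨s i, i, rfl⟩
  exact this.trans (hct i _)

lemma SymInvariant.eq_of_ker {k : ℕ} {R : VRel k} (hR : SymInvariant R) {s t : Fin k → ℚ}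
    (h : kerF s = kerF t) : R s = R t := by
  obtain ⟨α, hα, hst⟩ := exists_perm_of_ker (s := s) (t := t)
    (fun i j => by rw [← mem_kerF, h, mem_kerF])
  rw [← hR α hα s]; congr 1; funext i; exact hst i

/-- Equalities and disequalities cut out the tuples whose kernel lies between `E` and `F`. -/
lemma clone_between {Γ : Set ((k : ℕ) × VRel k)} (hne : Clone Γ (crisp NeS)) {n : ℕ}
    (E F : Finset (Fin n × Fin n)) :
    Clone Γ (crisp {x : Fin n → ℚ | E ⊆ kerF x ∧ kerF x ⊆ F}) := by
  have h := clone_inter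
    (clone_forall E (fun p => {x : Fin n → ℚ | x p.1 = x p.2}) (fun p => clone_eq (Γ := Γ) _ _))
    (clone_forall Fᶜ (fun p => {x : Fin n → ℚ | x p.1 ≠ x p.2}) (fun p => clone_ne hne _ _))
  convert h using 2
  ext x
  simp only [Set.mem_ofPred_eq, Set.mem_inter_iff, Finset.mem_compl]
  refine and_congr ⟨fun h p hp => mem_kerF.1 (h hp), fun h p hp => mem_kerF.2 (h p hp)⟩
    ⟨fun h p hp hx => hp (h (mem_kerF.2 hx)), fun h p hp => ?_⟩
  by_contra hF
  exact h p hF (mem_kerF.1 hp)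

/-! ### The soft equality relation -/

/-- A tuple `u` that is coarser than a feasible tuple `v` and strictly cheaper yields `(=)₀¹`. -/
lemma clone_soft_eq {Γ : Set ((k : ℕ) × VRel k)} (hne : Clone Γ (crisp NeS)) {k : ℕ}
    {R : VRel k} (hR : Clone Γ R) (hsym : SymInvariant R) {v : Fin k → ℚ} (hv : R v ≠ ⊤)
    (hex : ∃ u, kerF v ⊆ kerF u ∧ R u < R v) :
    Clone Γ (fun t : Fin 2 → ℚ => if t 0 = t 1 then (0 : WithTop ℚ) else 1) := by
  obtain ⟨u, ⟨hvu, hlt⟩, hmin⟩ := exists_minimalFor_of_wellFoundedLT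
    (fun u => kerF v ⊆ kerF u ∧ R u < R v) kerF hex
  have hge : ∀ w, kerF v ⊆ kerF w → kerF w ⊆ kerF u → kerF w ≠ kerF u → R v ≤ R w := by
    intro w h1 h2 h3
    by_contra hlt'
    exact h3 (h2.antisymm (hmin ⟨h1, not_le.1 hlt'⟩ h2))
  obtain ⟨i, j, hu, hv'⟩ : ∃ i j, u i = u j ∧ v i ≠ v j := by
    by_contra! hcon
    have : kerF u = kerF v := (kerF_subset.2 hcon).antisymm hvu
    rw [hsym.eq_of_ker this] at hlt
    exact lt_irrefl _ hlt
  have hC := clone_add hR (clone_between hne (kerF v) (kerF u))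
  have hP : Clone Γ (fun x : Fin 2 → ℚ => if x 0 = x 1 then R u else R v) := by
    refine clone_proj hC ![i, j] (fun x => ?_)
    -- A tuple attaining the infimum is obtained by moving `u` or `v` to match `x`.
    have key : ∀ w : Fin k → ℚ, kerF v ⊆ kerF w → kerF w ⊆ kerF u →
        (x 0 = x 1 ↔ w i = w j) → ∃ w' : Fin k → ℚ, (∀ l, w' (![i, j] l) = x l) ∧
          R w = R w' + crisp {x : Fin k → ℚ | kerF v ⊆ kerF x ∧ kerF x ⊆ kerF u} w' := by
      intro w h1 h2 h3
      obtain ⟨α, hα, hαx⟩ := exists_perm_of_ker (s := fun l => w (![i, j] l)) (t := x) (by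
        intro a b
        fin_cases a <;> fin_cases b <;> simp_all [eq_comm])
      have hk : kerF (fun l => α (w l)) = kerF w := by
        ext ⟨a, b⟩; simp [mem_kerF, hα.1.eq_iff]
      refine ⟨fun l => α (w l), hαx, ?_⟩
      simp only [crisp, Set.mem_ofPred_eq, hk, h1, h2, and_self, if_true, add_zero, hsym α hα w]
    constructor
    · rintro z ⟨w, hwx, rfl⟩
      have h0 : w i = x 0 := hwx 0
      have h1 : w j = x 1 := hwx 1
      by_cases hw : kerF v ⊆ kerF w ∧ kerF w ⊆ kerF u
      · simp only [crisp, Set.mem_ofPred_eq, hw, and_self, if_true, add_zero]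
        by_cases hk : kerF w = kerF u
        · have : x 0 = x 1 := by rw [← h0, ← h1, ← mem_kerF, hk, mem_kerF, hu]
          simp [this, hsym.eq_of_ker hk]
        · have := hge w hw.1 hw.2 hk
          split_ifs
          · exact hlt.le.trans this
          · exact this
      · simp [crisp, hw]
    · intro b hb
      apply hb
      by_cases hx : x 0 = x 1
      · simp only [hx, if_true]
        exact key u hvu subset_rfl (by simp [hx, hu])
      · simp only [hx, if_false]
        exact key v subset_rfl hvu (by simp [hx, hv'])
  obtain ⟨b, hb⟩ := WithTop.ne_top_iff_exists.1 hv
  obtain ⟨a, ha⟩ := WithTop.ne_top_iff_exists.1 (ne_top_of_lt hlt)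
  rw [← ha, ← hb] at hP
  have hab : a < b := by rw [← ha, ← hb] at hlt; exact_mod_cast hlt
  have hfin := Clone.scale (b - a)⁻¹ (inv_nonneg.2 (sub_nonneg.2 hab.le)) (Clone.shift (-a) hP)
  convert hfin using 2 with x
  split_ifs
  · rw [← WithTop.coe_add, ← WithTop.coe_mul]; simp
  · rw [← WithTop.coe_add, ← WithTop.coe_mul, ← sub_eq_add_neg,
      inv_mul_cancel₀ (sub_pos.2 hab).ne']; simp

/-! ### The relation `Dis` -/

/-- In the definition of `Dis`, the condition `a ≠ c` forbids `a = b = c`, so that one of the two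
occurrences of `T` must satisfy its first equality. -/
lemma clone_dis_of_four {Γ : Set ((k : ℕ) × VRel k)} (hne : Clone Γ (crisp NeS))
    {T : Set (Fin 4 → ℚ)} (hT : Clone Γ (crisp T))
    (hor : ∀ x ∈ T, x 0 = x 1 ∨ x 2 = x 3)
    (h1 : ∀ x y z : ℚ, x ≠ y → x ≠ z → y ≠ z → ![x, x, y, z] ∈ T)
    (h2 : ∀ x y z : ℚ, x ≠ y → x ≠ z → y ≠ z → ![x, y, z, z] ∈ T) :
    Clone Γ (crisp DisS) := by
  have h := clone_image (clone_inter (clone_inter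
    (clone_preimage hT (![0, 1, 3, 4] : Fin 4 → Fin 6))
    (clone_preimage hT (![1, 2, 4, 5] : Fin 4 → Fin 6)))
    (clone_inter (clone_ne hne (3 : Fin 6) 5) (clone_ne hne (0 : Fin 6) 2)))
    (![0, 1, 2] : Fin 3 → Fin 6)
  convert h using 2
  ext x
  have ev : ∀ (w : Fin 6 → ℚ) (a b c d : Fin 6),
      (fun l => w ((![a, b, c, d] : Fin 4 → Fin 6) l)) = ![w a, w b, w c, w d] := by
    intro w a b c d; funext l; fin_cases l <;> rfl
  simp only [DisS, Set.mem_ofPred_eq, Set.mem_inter_iff, ev]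
  constructor
  · intro hx
    obtain ⟨p, hp⟩ := Infinite.exists_notMem_finset ({x 0, x 1, x 2} : Finset ℚ)
    obtain ⟨q, hq⟩ := Infinite.exists_notMem_finset ({x 0, x 1, x 2, p} : Finset ℚ)
    simp only [Finset.mem_insert, Finset.mem_singleton, not_or] at hp hq
    obtain ⟨hp0, hp1, hp2⟩ := hp
    obtain ⟨hq0, hq1, hq2, hqp⟩ := hq
    rcases hx with ⟨h01, h12⟩ | ⟨h01, h12⟩
    · refine ⟨![x 0, x 1, x 2, p, q, q], ⟨⟨?_, ?_⟩, Ne.symm hqp, ?_⟩, ?_⟩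
      · have := h1 (x 1) p q (Ne.symm hp1) (Ne.symm hq1) (Ne.symm hqp)
        simpa [h01] using this
      · exact h2 (x 1) (x 2) q h12 (Ne.symm hq1) (Ne.symm hq2)
      · simpa [h01] using h12
      · intro l; fin_cases l <;> rfl
    · refine ⟨![x 0, x 1, x 2, p, p, q], ⟨⟨?_, ?_⟩, Ne.symm hqp, ?_⟩, ?_⟩
      · exact h2 (x 0) (x 1) p h01 (Ne.symm hp0) (Ne.symm hp1)
      · have := h1 (x 1) p q (Ne.symm hp1) (Ne.symm hq1) (Ne.symm hqp)
        simpa [← h12] using this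
      · simpa [← h12] using h01
      · intro l; fin_cases l <;> rfl
  · rintro ⟨w, ⟨⟨ha, hb⟩, h35, h02⟩, hw⟩
    have e0 : w 0 = x 0 := hw 0
    have e1 : w 1 = x 1 := hw 1
    have e2 : w 2 = x 2 := hw 2
    have ha' : w 0 = w 1 ∨ w 3 = w 4 := hor _ ha
    have hb' : w 1 = w 2 ∨ w 4 = w 5 := hor _ hb
    rw [← e0, ← e1, ← e2]
    grind

/-- A crisp relation `S` that depends only on kernels, and whose set of kernels is not closed under
intersection, yields `Dis`. The operation `g` is any choice of tuples realising intersections. -/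
lemma clone_dis {Γ : Set ((k : ℕ) × VRel k)} (hne : Clone Γ (crisp NeS)) {k : ℕ}
    {S : Set (Fin k → ℚ)} (hS : Clone Γ (crisp S))
    (hker : ∀ s t, kerF s = kerF t → s ∈ S → t ∈ S)
    {g : (Fin k → ℚ) → (Fin k → ℚ) → (Fin k → ℚ)}
    (hg : ∀ s t, kerF (g s t) = kerF s ∩ kerF t)
    (hex : ∃ s t, s ∈ S ∧ t ∈ S ∧ g s t ∉ S) :
    Clone Γ (crisp DisS) := by
  obtain ⟨s₀, t₀, h₀⟩ := hex
  obtain ⟨⟨s₁, t₁⟩, h₁, hmax⟩ := exists_maximalFor_of_wellFoundedGT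
    (fun p : (Fin k → ℚ) × (Fin k → ℚ) => p.1 ∈ S ∧ p.2 ∈ S ∧ g p.1 p.2 ∉ S)
    (fun p => kerF (g p.1 p.2)) ⟨(s₀, t₀), h₀⟩
  obtain ⟨⟨s, t⟩, ⟨⟨hs, ht, hst⟩, hN⟩, hmin⟩ := exists_minimalFor_of_wellFoundedLT
    (fun p : (Fin k → ℚ) × (Fin k → ℚ) => (p.1 ∈ S ∧ p.2 ∈ S ∧ g p.1 p.2 ∉ S) ∧
      kerF (g p.1 p.2) = kerF (g s₁ t₁))
    (fun p => (kerF p.1, kerF p.2)) ⟨(s₁, t₁), h₁, rfl⟩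
  simp only at hs ht hst hN
  set N := kerF (g s₁ t₁) with hNdef
  have hNst : N = kerF s ∩ kerF t := by rw [← hN, hg]
  -- Maximality of `N`: meets of tuples of `S` with kernel strictly above `N` stay in `S`.
  have hup : ∀ u w, u ∈ S → w ∈ S → N ⊆ kerF (g u w) → kerF (g u w) ≠ N → g u w ∈ S := by
    intro u w hu hw h1 h2
    by_contra h3
    exact h2 ((hmax (j := (u, w)) ⟨hu, hw, h3⟩ h1).antisymm h1)
  have hNS : ∀ u, kerF u = N → u ∉ S := fun u hu h => hst (hker u _ (hu.trans hN.symm) h)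
  -- If neither inclusion held, one of `ker s`, `ker t` could be replaced by its intersection with
  -- `ker u`, against minimality, or `ker u` would be `N`.
  have hdich : ∀ u ∈ S, N ⊆ kerF u → kerF u ⊆ kerF s ∪ kerF t →
      kerF s ⊆ kerF u ∨ kerF t ⊆ kerF u := by
    intro u hu h1 h2
    by_cases hsu : kerF (g s u) = N
    · by_cases htu : kerF (g t u) = N
      · exfalso
        refine hNS u ?_ hu
        rw [hg] at hsu htu
        rw [← Finset.inter_eq_right.2 h2, Finset.union_inter_distrib_right, hsu, htu,
          Finset.union_self]
      · right
        have hmem := hup t u ht hu (by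
          rw [hg]; exact Finset.subset_inter (hNst ▸ Finset.inter_subset_right) h1) htu
        have hk : kerF (g s (g t u)) = N := by
          rw [hg, hg, ← Finset.inter_assoc, ← hNst, Finset.inter_eq_left.2 h1]
        have := hmin (j := (s, g t u)) ⟨⟨hs, hmem, hNS _ hk⟩, hk⟩
          ⟨le_rfl, by simp only [hg]; exact Finset.inter_subset_left⟩
        have := this.2
        simp only [hg] at this
        exact this.trans Finset.inter_subset_right
    · left
      have hmem := hup s u hs hu (by
        rw [hg]; exact Finset.subset_inter (hNst ▸ Finset.inter_subset_left) h1) hsu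
      have hk : kerF (g (g s u) t) = N := by
        rw [hg, hg, Finset.inter_right_comm, ← hNst, Finset.inter_eq_left.2 h1]
      have := hmin (j := (g s u, t)) ⟨⟨hmem, ht, hNS _ hk⟩, hk⟩
        ⟨by simp only [hg]; exact Finset.inter_subset_left, le_rfl⟩
      have := this.1
      simp only [hg] at this
      exact this.trans Finset.inter_subset_right
  set S' : Set (Fin k → ℚ) := S ∩ {x | N ⊆ kerF x ∧ kerF x ⊆ kerF s ∪ kerF t} with hS'def
  have hS' : Clone Γ (crisp S') := clone_inter hS (clone_between hne _ _)
  have hsS' : s ∈ S' := ⟨hs, hNst ▸ Finset.inter_subset_left, Finset.subset_union_left⟩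
  have htS' : t ∈ S' := ⟨ht, hNst ▸ Finset.inter_subset_right, Finset.subset_union_right⟩
  have hmove : ∀ (α : ℚ → ℚ) (_ : Function.Bijective α) (u) (_ : u ∈ S'),
      (fun l => α (u l)) ∈ S' := by
    intro α hα u hu
    have hk : kerF (fun l => α (u l)) = kerF u := by
      ext ⟨a, b⟩; simp [mem_kerF, hα.1.eq_iff]
    exact ⟨hker u _ hk.symm hu.1, by simpa only [Set.mem_ofPred_eq, hk] using hu.2⟩
  have hdich' : ∀ u ∈ S', ∀ a b c d, s a = s b → t c = t d → u a = u b ∨ u c = u d := by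
    intro u hu a b c d h1 h2
    rcases hdich u hu.1 hu.2.1 hu.2.2 with h | h
    · exact Or.inl (kerF_subset.1 h _ _ h1)
    · exact Or.inr (kerF_subset.1 h _ _ h2)
  obtain ⟨i, j, hsij, htij⟩ : ∃ i j, s i = s j ∧ t i ≠ t j := by
    by_contra! hcon
    exact hNS s (hNst ▸ (Finset.inter_eq_left.2 (kerF_subset.2 hcon)).symm) hs
  obtain ⟨a', b', htab, hsab⟩ : ∃ i j, t i = t j ∧ s i ≠ s j := by
    by_contra! hcon
    exact hNS t (hNst ▸ (Finset.inter_eq_right.2 (kerF_subset.2 hcon)).symm) ht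
  -- Whether an edge of `ker s \ N` meets an edge of `ker t \ N`.
  by_cases hshare : ∃ a b c, s a = s b ∧ t a ≠ t b ∧ t b = t c ∧ s b ≠ s c
  · obtain ⟨a, b, c, hab, hab', hbc, hbc'⟩ := hshare
    have h := clone_inter (clone_image hS' ![a, b, c]) (clone_ne hne (0 : Fin 3) 2)
    convert h using 2
    ext x
    simp only [DisS, Set.mem_ofPred_eq, Set.mem_inter_iff]
    constructor
    · rintro (⟨h01, h12⟩ | ⟨h01, h12⟩)
      · obtain ⟨α, hα, hαx⟩ := exists_perm_of_ker (s := fun l => s (![a, b, c] l)) (t := x) (by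
          intro l m
          fin_cases l <;> fin_cases m <;> simp <;> grind)
        exact ⟨⟨_, hmove α hα s hsS', hαx⟩, h01 ▸ h12⟩
      · obtain ⟨α, hα, hαx⟩ := exists_perm_of_ker (s := fun l => t (![a, b, c] l)) (t := x) (by
          intro l m
          fin_cases l <;> fin_cases m <;> simp <;> grind)
        exact ⟨⟨_, hmove α hα t htS', hαx⟩, h12 ▸ h01⟩
    · rintro ⟨⟨u, hu, hux⟩, h02⟩
      have e0 : u a = x 0 := hux 0
      have e1 : u b = x 1 := hux 1
      have e2 : u c = x 2 := hux 2
      have := hdich' u hu a b b c hab hbc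
      grind
  · push Not at hshare
    have hs1 : ∀ l, l = a' ∨ l = b' → s i ≠ s l := by
      rintro l (rfl | rfl) h <;> by_cases h' : t i = t l <;> grind
    have ht1 : ∀ l, l = i ∨ l = j → t l ≠ t a' := by
      rintro l (rfl | rfl) h <;> by_cases h' : s l = s a' <;> grind
    have hsa := hs1 a' (Or.inl rfl)
    have hsb := hs1 b' (Or.inr rfl)
    have hti := ht1 i (Or.inl rfl)
    have htj := ht1 j (Or.inr rfl)
    refine clone_dis_of_four hne (clone_image hS' ![i, j, a', b']) ?_ ?_ ?_
    · rintro x ⟨u, hu, hux⟩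
      have e0 : u i = x 0 := hux 0
      have e1 : u j = x 1 := hux 1
      have e2 : u a' = x 2 := hux 2
      have e3 : u b' = x 3 := hux 3
      rw [← e0, ← e1, ← e2, ← e3]
      exact hdich' u hu _ _ _ _ hsij htab
    · intro x y z hxy hxz hyz
      obtain ⟨α, hα, hαx⟩ := exists_perm_of_ker
        (s := fun l => s (![i, j, a', b'] l)) (t := ![x, x, y, z]) (by
          intro l m
          fin_cases l <;> fin_cases m <;> simp <;> grind)
      exact ⟨_, hmove α hα s hsS', hαx⟩
    · intro x y z hxy hxz hyz
      obtain ⟨α, hα, hαx⟩ := exists_perm_of_ker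
        (s := fun l => t (![i, j, a', b'] l)) (t := ![x, y, z, z]) (by
          intro l m
          fin_cases l <;> fin_cases m <;> simp <;> grind)
      exact ⟨_, hmove α hα t htS', hαx⟩

/-- If some injective binary operation fails to improve some relation of a set `Γ` of
`Sym(ℚ)`-invariant valued relations, then `⟨Γ ∪ {≠}⟩` contains `(=)₀¹` or the crisp
relation `Dis`. -/
theorem stmt4 (Γ : Set ((k : ℕ) × VRel k)) (hsym : ∀ p ∈ Γ, SymInvariant p.2)
    (h : ∃ g : ℚ → ℚ → ℚ, Function.Injective (fun p : ℚ × ℚ => g p.1 p.2) ∧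
      ∃ p ∈ Γ, ¬ Improves2 g p.2) :
    Clone (insert (Sigma.mk 2 (crisp NeS)) Γ)
        (fun t : Fin 2 → ℚ => if t 0 = t 1 then (0 : WithTop ℚ) else 1) ∨
      Clone (insert (Sigma.mk 2 (crisp NeS)) Γ) (crisp DisS) := by
  obtain ⟨g, hg, ⟨k, R⟩, hRΓ, himp⟩ := h
  have hR := hsym _ hRΓ
  simp only at hR himp
  have hne : Clone (insert (Sigma.mk 2 (crisp NeS)) Γ) (crisp NeS) :=
    Clone.base (Set.mem_insert _ _)
  have hRC : Clone (insert (Sigma.mk 2 (crisp NeS)) Γ) R :=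
    Clone.base (Set.mem_insert_of_mem _ hRΓ)
  by_cases hA : ∃ v, R v ≠ ⊤ ∧ ∃ u, kerF v ⊆ kerF u ∧ R u < R v
  · obtain ⟨v, hv, hex⟩ := hA
    exact Or.inl (clone_soft_eq hne hRC hR hv hex)
  right
  push Not at hA
  have hgk : ∀ s t : Fin k → ℚ, kerF (fun i => g (s i) (t i)) = kerF s ∩ kerF t := by
    intro s t
    ext ⟨i, j⟩
    rw [Finset.mem_inter, mem_kerF, mem_kerF, mem_kerF]
    have := hg.eq_iff (a := (s i, t i)) (b := (s j, t j))
    simpa using this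
  have hfe : crisp (FeasSet R) = fun t => if R t ≠ ⊤ then (0 : WithTop ℚ) else ⊤ := by
    funext t; by_cases ht : R t = ⊤ <;> simp [crisp, FeasSet, ht]
  refine clone_dis hne (S := FeasSet R) (hfe ▸ Clone.feas hRC) ?_
    (g := fun s t i => g (s i) (t i)) hgk ?_
  · intro s t hst hs
    simpa only [FeasSet, Set.mem_ofPred_eq, hR.eq_of_ker hst] using hs
  · unfold Improves2 at himp
    push Not at himp
    obtain ⟨s, t, hst⟩ := himp
    have hfin := ne_top_of_lt hst
    rw [WithTop.add_ne_top] at hfin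
    refine ⟨s, t, hfin.1, hfin.2, fun hgs => ?_⟩
    have h1 := hA _ hgs s (by rw [hgk]; exact Finset.inter_subset_left)
    have h2 := hA _ hgs t (by rw [hgk]; exact Finset.inter_subset_right)
    rw [two_nsmul] at hst
    exact absurd (add_le_add h1 h2) (not_le.2 hst)
end

section
/- Let Γ be a set of temporal valued relations on ℚ such that the crisp binary relation < belongs to ⟨Γ⟩, and suppose that some relation R ∈ Γ attains at least two distinct finite values. Then at least one of the following holds: the crisp relation Cyc belongs to ⟨Γ⟩; the valued relation (≠)₀¹ (value 1 if x = y, value 0 if x ≠ y) belongs to ⟨Γ⟩; the valued relation R_{1,0,∞} belongs to ⟨Γ⟩. -/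
/-!
Every relation in `⟨Γ⟩` is temporal, and by Cantor's back-and-forth argument a temporal relation
depends only on the order type of its argument (`Temporal.eq_of_lt_iff`). Hence it has a finite
range and all infima in projections are attained. Say that `⟨Γ⟩` *splits* at arity `n` if some
`n`-ary member has two distinct finite values (`TwoValued Γ n`).

**Reduction to arity two** (`TwoValued.descend`). Suppose that `R` is a `k`-ary member, `k ≥ 3`,
with two finite values, and that `⟨Γ⟩` does not split at arity `k - 1`. Let
`R s < R t` be finite. As every projection of a member of `⟨Γ⟩` along one coordinate
has at most one finite value, any coordinate of a feasible tuple can be changed so as to make the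
value at most that of any other feasible tuple (`TwoValued.exists_update_le`).
If `t i = t j` with `i ≠ j`, change a third coordinate of `t` to reach a value at most `R s`:
the identification `x i = x j` then has two finite values. If `t` is injective, let `t i` and `t j` be its smallest and
largest entries. Changing `t j` gives a tuple `u` with `R u ≤ R s` that still satisfies the
constraints `x a < x b` for `t a < t b`, `a, b ≠ j`. Impose these constraints on `R`: the result `R'`
takes both values `R t` and `R u`, so changing the coordinate `i` of `t` gives a tuple with
`R'`-value at most `R u < R t`. But the constraints force the new entry to stay below all
others, so the tuple has the order type of `t`, a contradiction.

**Arity two** (`Clone.of_twoValued_two`). A binary member is `R_{a,b,c}`. Put `m = min a b c`. The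
infimum over `z` of `[x < z] + R_{a,b,c}(z, y)` is `R_{c,m,c}`; symmetrising, shifting and scaling
turn it into `(≠)₀¹` whenever `m < c < ∞`. The remaining cases are, up to exchanging the arguments,
`R_{a,m,m}` and `R_{a,m,∞}` with `m < a < ∞`, which are `(≠)₀¹` and `R_{1,0,∞}` up to shifting and
scaling. So the conclusion always holds through its second or third alternative.
-/

open Classical

/-! ### Homogeneity of the rational order -/

/-- `(ℚ, <)` is homogeneous: tuples of the same order type are related by an automorphism. -/
lemma exists_orderIso_of_lt_iff {k : ℕ} (s t : Fin k → ℚ)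
    (h : ∀ i j, s i < s j ↔ t i < t j) : ∃ α : ℚ ≃o ℚ, ∀ i, α (s i) = t i := by
  cases nonempty_encodable ℚ
  -- The back-and-forth construction of Cantor's theorem, started at the finite map `s i ↦ t i`.
  let f₀ : Order.PartialIso ℚ ℚ := ⟨Finset.univ.image (fun i => (s i, t i)), by
    intro p hp q hq
    simp only [Finset.mem_image, Finset.mem_univ, true_and] at hp hq
    obtain ⟨i, rfl⟩ := hp
    obtain ⟨j, rfl⟩ := hq
    rcases lt_trichotomy (s i) (s j) with hij | hij | hij
    · rw [(cmp_eq_lt_iff _ _).2 hij, (cmp_eq_lt_iff _ _).2 ((h i j).1 hij)]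
    · have h1 : ¬ t i < t j := fun hc => absurd ((h i j).2 hc) (by simp [hij])
      have h2 : ¬ t j < t i := fun hc => absurd ((h j i).2 hc) (by simp [hij])
      rw [(cmp_eq_eq_iff _ _).2 hij, (cmp_eq_eq_iff _ _).2 (le_antisymm (not_lt.1 h2) (not_lt.1 h1))]
    · rw [(cmp_eq_gt_iff _ _).2 hij, (cmp_eq_gt_iff _ _).2 ((h j i).1 hij)]⟩
  let C : ℚ ⊕ ℚ → Order.Cofinal (Order.PartialIso ℚ ℚ) := fun p =>
    Sum.recOn p (Order.PartialIso.definedAtLeft ℚ) (Order.PartialIso.definedAtRight ℚ)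
  let I : Order.Ideal (Order.PartialIso ℚ ℚ) := Order.idealOfCofinals f₀ C
  have hf₀ : f₀ ∈ I := Order.mem_idealOfCofinals f₀ C
  let F a := Order.PartialIso.funOfIdeal a I
    (Order.cofinal_meets_idealOfCofinals _ C (Sum.inl a))
  let G b := Order.PartialIso.invOfIdeal b I
    (Order.cofinal_meets_idealOfCofinals _ C (Sum.inr b))
  refine ⟨OrderIso.ofCmpEqCmp (fun a => (F a).val) (fun b => (G b).val) fun a b => ?_,
    fun i => ?_⟩
  · rcases (F a).prop with ⟨f, hf, ha⟩
    rcases (G b).prop with ⟨g, hg, hb⟩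
    rcases I.directed _ hf _ hg with ⟨m, _, fm, gm⟩
    exact m.prop (a, _) (fm ha) (_, b) (gm hb)
  · change (F (s i)).val = t i
    rcases (F (s i)).prop with ⟨f, hf, ha⟩
    rcases I.directed _ hf _ hf₀ with ⟨m, _, fm, gm⟩
    have hi : (s i, t i) ∈ f₀.val :=
      Finset.mem_image.2 ⟨i, Finset.mem_univ _, rfl⟩
    have := m.prop (s i, _) (fm ha) (s i, t i) (gm hi)
    rw [cmp_self_eq_eq] at this
    exact (cmp_eq_eq_iff _ _).1 this.symm

lemma Temporal.eq_of_lt_iff {k : ℕ} {R : VRel k} (hR : Temporal R) {s t : Fin k → ℚ}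
    (h : ∀ i j, s i < s j ↔ t i < t j) : R s = R t := by
  obtain ⟨α, hα⟩ := exists_orderIso_of_lt_iff s t h
  rw [← hR α α.bijective α.strictMono s]
  congr 1
  exact funext hα

lemma Temporal.finite_range {k : ℕ} {R : VRel k} (hR : Temporal R) : (Set.range R).Finite := by
  let τ : (Fin k → ℚ) → (Fin k → Fin k → Prop) := fun t i j => t i < t j
  have h : ∀ s t, τ s = τ t → R s = R t := fun s t hst =>
    hR.eq_of_lt_iff fun i j => by simpa [τ] using congrFun (congrFun hst i) j
  -- `R` factors through the finite set of order types.
  have hfac : Function.FactorsThrough R τ := fun s t hst => h s t hst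
  refine (Set.finite_range (Function.extend τ R (fun _ => ⊤))).subset ?_
  rintro _ ⟨t, rfl⟩
  exact ⟨τ t, hfac.extend_apply _ t⟩

lemma Clone.temporal {Γ : Set ((k : ℕ) × VRel k)} (hT : ∀ p ∈ Γ, Temporal p.2) {k : ℕ}
    {R : VRel k} (hR : Clone Γ R) : Temporal R := by
  induction hR with
  | base h => exact hT _ h
  | eqRel =>
    intro α hα _ t
    simp [crisp, hα.1.eq_iff]
  | emptyRel => intro α _ _ t; simp [crisp]
  | sum σ _ ih =>
    intro α hα hm x
    exact Finset.sum_congr rfl fun i _ => ih i α hα hm _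
  | @proj k n R R' _ hglb ih =>
    intro α hα hm s
    refine (hglb _).unique ?_
    convert hglb s using 1
    have key : ∀ t : Fin n → ℚ,
        R (Fin.append (fun i => α (s i)) (fun i => α (t i))) = R (Fin.append s t) := by
      intro t
      rw [← ih α hα hm (Fin.append s t)]
      congr 1
      funext i
      refine Fin.addCases (fun j => ?_) (fun j => ?_) i <;> simp
    ext v
    constructor
    · rintro ⟨t, rfl⟩
      choose t' ht' using fun i => hα.2 (t i)
      refine ⟨t', ?_⟩
      rw [← key t']
      simp only [ht']
    · rintro ⟨t, rfl⟩
      exact ⟨_, (key t).symm⟩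
  | shift c _ ih => intro α hα hm t; simp only [ih α hα hm t]
  | scale q hq _ ih => intro α hα hm t; simp only [ih α hα hm t]
  | feas _ ih => intro α hα hm t; simp only [ih α hα hm t]
  | opt _ ih => intro α hα hm t; simp only [ih α hα hm t]

/-! ### Derived closure properties of the clone -/

section Closure

variable {Γ : Set ((k : ℕ) × VRel k)}

lemma Clone.reindex {k n : ℕ} {R : VRel k} (hR : Clone Γ R) (σ : Fin k → Fin n) :
    Clone Γ (fun x : Fin n → ℚ => R (fun j => x (σ j))) := by
  have := Clone.sum (Γ := Γ) (m := 1) (n := n) (k := fun _ => k) (R := fun _ => R)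
    (fun _ => σ) (fun _ => hR)
  simpa using this

lemma Clone.add {n : ℕ} {R S : VRel n} (hR : Clone Γ R) (hS : Clone Γ S) :
    Clone Γ (fun x : Fin n → ℚ => R x + S x) := by
  have := Clone.sum (Γ := Γ) (m := 2) (n := n) (k := fun _ => n) (R := ![R, S])
    (fun _ => id) (fun i => by fin_cases i <;> simpa)
  simpa [Fin.sum_univ_two] using this

/-- Any finite system of constraints `x a < x b` can be imposed on a member of the clone. -/
lemma Clone.restrict (hlt : Clone Γ (crisp LtS)) {n : ℕ} {R : VRel n} (hR : Clone Γ R)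
    (F : Finset (Fin n × Fin n)) :
    Clone Γ (fun x : Fin n → ℚ => if ∀ p ∈ F, x p.1 < x p.2 then R x else ⊤) := by
  induction F using Finset.induction_on with
  | empty => simpa using hR
  | insert p F _ ih =>
    have := ih.add (hlt.reindex ![p.1, p.2])
    convert this using 2 with x
    by_cases h1 : x p.1 < x p.2 <;> by_cases h2 : ∀ q ∈ F, x q.1 < x q.2 <;>
      simp [crisp, LtS, h1, Finset.mem_insert, forall_eq_or_imp]

/-- Projection along an arbitrary coordinate `p`; the infimum is attained. -/
lemma Clone.exists_proj (hT : ∀ p ∈ Γ, Temporal p.2) {n : ℕ} {R : VRel (n + 1)}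
    (hR : Clone Γ R) (p : Fin (n + 1)) :
    ∃ Q : VRel n, Clone Γ Q ∧ ∀ s, (∃ q, Q s = R (p.insertNth q s)) ∧
      ∀ q, Q s ≤ R (p.insertNth q s) := by
  have hmin : ∀ s : Fin n → ℚ, ∃ q, ∀ q', R (p.insertNth q s) ≤ R (p.insertNth q' s) := by
    intro s
    have hfin : (Set.range fun q : ℚ => R (p.insertNth q s)).Finite :=
      (hR.temporal hT).finite_range.subset (by rintro _ ⟨q, rfl⟩; exact ⟨_, rfl⟩)
    obtain ⟨_, ⟨q, rfl⟩, hq⟩ := Set.exists_min_image _ id hfin (Set.range_nonempty _)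
    exact ⟨q, fun q' => hq _ ⟨q', rfl⟩⟩
  choose q hq using hmin
  refine ⟨fun s => R (p.insertNth (q s) s), ?_, fun s => ⟨⟨q s, rfl⟩, hq s⟩⟩
  have happ : ∀ (s : Fin n → ℚ) (t : Fin 1 → ℚ),
      (fun j => Fin.append s t
        (p.insertNth (α := fun _ => Fin (n + 1)) (Fin.natAdd n 0) (Fin.castAdd 1) j))
        = p.insertNth (α := fun _ => ℚ) (t 0) s := by
    intro s t
    funext j
    refine Fin.succAboveCases p ?_ (fun j => ?_) j
    · simp only [Fin.insertNth_apply_same, Fin.append_right]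
    · simp only [Fin.insertNth_apply_succAbove, Fin.append_left]
  refine Clone.proj (n := 1) (hR.reindex
    (p.insertNth (α := fun _ => Fin (n + 1)) (Fin.natAdd n 0) (Fin.castAdd 1))) fun s => ?_
  refine IsLeast.isGLB ⟨⟨fun _ => q s, ?_⟩, ?_⟩
  · rw [happ]
  · rintro _ ⟨t, rfl⟩
    rw [happ]
    exact hq s _

end Closure

/-! ### Reduction to arity two -/

/-- The clone generated by `Γ` has a member of arity `n` with two distinct finite values. -/
def TwoValued (Γ : Set ((k : ℕ) × VRel k)) (n : ℕ) : Prop :=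
  ∃ R : VRel n, Clone Γ R ∧ ∃ s t, R s ≠ ⊤ ∧ R t ≠ ⊤ ∧ R s ≠ R t

section Reduction

variable {Γ : Set ((k : ℕ) × VRel k)}

/-- If the clone has no `n`-ary member with two finite values, then changing one coordinate of a
feasible tuple can bring its value down to that of any other feasible tuple. -/
lemma TwoValued.exists_update_le (hT : ∀ p ∈ Γ, Temporal p.2) {n : ℕ} (hn : ¬ TwoValued Γ n)
    {R : VRel (n + 1)} (hR : Clone Γ R) {x y : Fin (n + 1) → ℚ} (hx : R x ≠ ⊤) (hy : R y ≠ ⊤)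
    (p : Fin (n + 1)) : ∃ q, R (Function.update x p q) ≤ R y := by
  obtain ⟨Q, hQ, hQR⟩ := hR.exists_proj hT p
  have hle : ∀ z, Q (p.removeNth z) ≤ R z := fun z => by
    have := (hQR (p.removeNth z)).2 (z p)
    rwa [Fin.insertNth_self_removeNth] at this
  have heq : Q (p.removeNth x) = Q (p.removeNth y) := by
    by_contra hne
    exact hn ⟨Q, hQ, _, _, ne_top_of_le_ne_top hx (hle x), ne_top_of_le_ne_top hy (hle y), hne⟩
  obtain ⟨q, hq⟩ := (hQR (p.removeNth x)).1
  refine ⟨q, ?_⟩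
  rw [← Fin.insertNth_removeNth, ← hq, heq]
  exact hle y

/-- If the clone has no `n`-ary member with two finite values, then an `(n + 1)`-ary member has
at most one finite value on the tuples with two prescribed equal coordinates. -/
lemma TwoValued.eq_of_identify {n : ℕ} (hn : ¬ TwoValued Γ n)
    {R : VRel (n + 1)} (hR : Clone Γ R) {x y : Fin (n + 1) → ℚ} (hx : R x ≠ ⊤) (hy : R y ≠ ⊤)
    {i j : Fin (n + 1)} (hij : i ≠ j) (hxij : x i = x j) (hyij : y i = y j) : R x = R y := by
  obtain ⟨i', rfl⟩ := Fin.exists_succAbove_eq hij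
  let σ : Fin (n + 1) → Fin n := j.insertNth (α := fun _ => Fin n) i' id
  have hσ : ∀ z : Fin (n + 1) → ℚ, z (j.succAbove i') = z j →
      (fun l => (j.removeNth z) (σ l)) = z := by
    intro z hz
    funext l
    refine Fin.succAboveCases j ?_ (fun l => ?_) l
    · simp [σ, Fin.removeNth, hz]
    · simp [σ, Fin.removeNth]
  by_contra hne
  refine hn ⟨_, hR.reindex σ, j.removeNth x, j.removeNth y, ?_⟩
  simp only [hσ x hxij, hσ y hyij]
  exact ⟨hx, hy, hne⟩

/-- Two finite values at arity `k ≥ 3` force two finite values at arity `k - 1`. -/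
lemma TwoValued.descend (hT : ∀ p ∈ Γ, Temporal p.2) (hlt : Clone Γ (crisp LtS)) {n : ℕ}
    (h : TwoValued Γ (n + 3)) : TwoValued Γ (n + 2) := by
  by_contra hn
  obtain ⟨R, hR, s, t, hs, ht, hst⟩ := h
  wlog hlt' : R s < R t generalizing s t
  · exact this t s ht hs hst.symm (lt_of_le_of_ne (not_lt.1 hlt') hst.symm)
  have third : ∀ i j : Fin (n + 3), ∃ p, p ≠ i ∧ p ≠ j := by
    intro i j
    obtain ⟨p, hp⟩ := Finset.exists_mem_notMem_of_card_lt_card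
      (s := {i, j}) (t := Finset.univ) (by
        rw [Finset.card_univ, Fintype.card_fin]
        exact lt_of_le_of_lt Finset.card_le_two (by omega))
    exact ⟨p, by simpa using hp⟩
  by_cases hinj : Function.Injective t
  · obtain ⟨i, -, hi⟩ := Finset.exists_min_image Finset.univ t Finset.univ_nonempty
    obtain ⟨j, -, hj⟩ := Finset.exists_max_image Finset.univ t Finset.univ_nonempty
    replace hi : ∀ b, b ≠ i → t i < t b := fun b hb =>
      lt_of_le_of_ne (hi b (Finset.mem_univ _)) fun hc => hb (hinj hc).symm
    replace hj : ∀ b, b ≠ j → t b < t j := fun b hb =>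
      lt_of_le_of_ne (hj b (Finset.mem_univ _)) fun hc => hb (hinj hc)
    obtain ⟨c, hci, hcj⟩ := third i j
    have hij : i ≠ j := fun hc => lt_irrefl _ ((hi c hci).trans (hc ▸ hj c hcj))
    obtain ⟨q, hq⟩ := TwoValued.exists_update_le hT hn hR ht hs j
    set u := Function.update t j q with hu
    let F : Finset (Fin (n + 3) × Fin (n + 3)) :=
      Finset.univ.filter fun p => p.1 ≠ j ∧ p.2 ≠ j ∧ t p.1 < t p.2
    have hF : ∀ {p}, p ∈ F ↔ p.1 ≠ j ∧ p.2 ≠ j ∧ t p.1 < t p.2 := by simp [F]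
    have hR' := Clone.restrict hlt hR F
    set R' : VRel (n + 3) := fun x => if ∀ p ∈ F, x p.1 < x p.2 then R x else ⊤ with hR'def
    have htF : R' t = R t := if_pos fun p hp => (hF.1 hp).2.2
    have huF : R' u = R u := if_pos fun p hp => by
      obtain ⟨h1, h2, h3⟩ := hF.1 hp
      simpa [hu, Function.update_of_ne h1, Function.update_of_ne h2] using h3
    have hutop : R u ≠ ⊤ := ne_top_of_le_ne_top hs hq
    obtain ⟨r, hr⟩ := TwoValued.exists_update_le hT hn hR' (htF ▸ ht) (huF ▸ hutop) i
    set v := Function.update t i r with hv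
    rw [huF] at hr
    have hvF : ∀ p ∈ F, v p.1 < v p.2 := by
      by_contra hc
      have : R' v = ⊤ := if_neg hc
      rw [this, top_le_iff] at hr
      exact hutop hr
    have hvR : R' v = R v := if_pos hvF
    have hvi : v i = r := Function.update_self ..
    have hvb : ∀ b, b ≠ i → v b = t b := fun b hb => Function.update_of_ne hb ..
    have hrb : ∀ b, b ≠ i → r < t b := by
      have hne : ∀ b, b ≠ i → b ≠ j → r < t b := fun b hbi hbj => by
        have := hvF (i, b) (hF.2 ⟨hij, hbj, hi b hbi⟩)
        simpa only [hvi, hvb b hbi] using this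
      intro b hbi
      by_cases hbj : b = j
      · exact hbj ▸ (hne c hci hcj).trans (hj c hcj)
      · exact hne b hbi hbj
    -- The new entry `r` is still the smallest, so `v` and `t` have the same order type.
    have hvt : R v = R t := by
      refine (hR.temporal hT).eq_of_lt_iff fun a b => ?_
      by_cases ha : a = i <;> by_cases hb : b = i
      · subst ha; subst hb; simp
      · subst ha
        rw [hvi, hvb b hb]
        exact iff_of_true (hrb b hb) (hi b hb)
      · subst hb
        rw [hvi, hvb a ha]
        exact iff_of_false (hrb a ha).not_gt (hi a ha).not_gt
      · rw [hvb a ha, hvb b hb]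
    rw [hvR, hvt] at hr
    exact absurd (hr.trans hq) (not_le.2 hlt')
  · obtain ⟨i, j, hij, hne⟩ : ∃ i j, t i = t j ∧ i ≠ j := by
      simpa [Function.Injective] using hinj
    obtain ⟨p, hpi, hpj⟩ := third i j
    obtain ⟨q, hq⟩ := TwoValued.exists_update_le hT hn hR ht hs p
    have := TwoValued.eq_of_identify hn hR (ne_top_of_le_ne_top hs hq) ht hne
      (by simpa [Function.update_of_ne hpi.symm, Function.update_of_ne hpj.symm] using hij) hij
    exact absurd (this ▸ hq) (not_le.2 hlt')

lemma TwoValued.two (hT : ∀ p ∈ Γ, Temporal p.2) (hlt : Clone Γ (crisp LtS)) :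
    ∀ n, TwoValued Γ n → TwoValued Γ 2
  | 0, ⟨R, _, s, t, _, _, hne⟩ => absurd (congrArg R (Subsingleton.elim s t)) hne
  | 1, ⟨R, hR, s, t, _, _, hne⟩ => by
    refine absurd ((hR.temporal hT).eq_of_lt_iff fun i j => ?_) hne
    simp [Subsingleton.elim i j]
  | 2, h => h
  | n + 3, h => TwoValued.two hT hlt (n + 2) (h.descend hT hlt)

end Reduction

/-! ### Binary relations -/

section Binary

variable {Γ : Set ((k : ℕ) × VRel k)}

lemma Clone.Rabc_swap {a b c : WithTop ℚ} (h : Clone Γ (Rabc a b c)) : Clone Γ (Rabc a c b) := by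
  convert h.reindex ![(1 : Fin 2), 0] using 2 with x
  simp only [Rabc, Matrix.cons_val_zero, Matrix.cons_val_one]
  rcases lt_trichotomy (x 0) (x 1) with hx | hx | hx
  · simp [hx, hx.ne, hx.ne', hx.not_gt]
  · simp [hx]
  · simp [hx, hx.ne, hx.ne', hx.not_gt]

lemma Clone.Rabc_eq (hT : ∀ p ∈ Γ, Temporal p.2) {R : VRel 2} (hR : Clone Γ R) :
    R = Rabc (R ![0, 0]) (R ![0, 1]) (R ![1, 0]) := by
  funext x
  have key : ∀ y : Fin 2 → ℚ, (x 0 < x 1 ↔ y 0 < y 1) → (x 1 < x 0 ↔ y 1 < y 0) → R x = R y := by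
    intro y h1 h2
    refine (hR.temporal hT).eq_of_lt_iff fun i j => ?_
    fin_cases i <;> fin_cases j <;> simp_all
  rcases lt_trichotomy (x 0) (x 1) with hx | hx | hx
  · rw [Rabc, if_neg hx.ne, if_pos hx]
    exact key _ (by simp [hx]) (iff_of_false hx.not_gt (by simp))
  · rw [Rabc, if_pos hx]
    exact key _ (by simp [hx]) (by simp [hx])
  · rw [Rabc, if_neg hx.ne', if_neg hx.not_gt]
    exact key _ (iff_of_false hx.not_gt (by simp)) (by simp [hx])

/-- Composition of `<` with `R_{a,b,c}`. -/
lemma Clone.Rabc_comp (hlt : Clone Γ (crisp LtS)) {a b c : WithTop ℚ} (h : Clone Γ (Rabc a b c)) :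
    Clone Γ (Rabc c (min a (min b c)) c) := by
  refine Clone.proj (k := 2) (n := 1)
    ((hlt.reindex ![(0 : Fin 3), 2]).add (h.reindex ![(2 : Fin 3), 1])) fun s => ?_
  have happ : ∀ t : Fin 1 → ℚ, Fin.append s t 0 = s 0 ∧ Fin.append s t 1 = s 1 ∧
      Fin.append s t 2 = t 0 := fun t =>
    ⟨Fin.append_left s t 0, Fin.append_left s t 1, Fin.append_right s t 0⟩
  have hval : ∀ t : Fin 1 → ℚ,
      (crisp LtS (fun j => Fin.append s t (![(0 : Fin 3), 2] j)) +
        Rabc a b c (fun j => Fin.append s t (![(2 : Fin 3), 1] j))) =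
      if s 0 < t 0 then (if t 0 = s 1 then a else if t 0 < s 1 then b else c) else ⊤ := by
    intro t
    obtain ⟨h0, h1, h2⟩ := happ t
    by_cases hst : s 0 < t 0 <;> simp [crisp, LtS, Rabc, h0, h1, h2, hst]
  simp only [hval]
  rcases lt_or_ge (s 0) (s 1) with hs | hs
  · have hs' : Rabc c (min a (min b c)) c s = min a (min b c) := by simp [Rabc, hs, hs.ne]
    rw [hs']
    refine IsLeast.isGLB ⟨?_, ?_⟩
    · obtain ⟨z, hz1, hz2⟩ := exists_between hs
      rcases min_choice a (min b c) with hm | hm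
      · exact ⟨fun _ => s 1, by simp [hs, hm]⟩
      · rcases min_choice b c with hm' | hm'
        · exact ⟨fun _ => z, by rw [hm, hm']; simp [hz1, hz2, hz2.ne]⟩
        · refine ⟨fun _ => s 1 + 1, ?_⟩
          rw [hm, hm']
          have : s 0 < s 1 + 1 := by linarith
          simp [this]
    · rintro _ ⟨t, rfl⟩
      split_ifs <;> simp
  · have hs' : Rabc c (min a (min b c)) c s = c := by simp [Rabc, hs.not_gt]
    rw [hs']
    refine IsLeast.isGLB ⟨⟨fun _ => s 0 + 1, ?_⟩, ?_⟩
    · have h1 : ¬ s 0 + 1 < s 1 := by linarith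
      have h2 : s 0 + 1 ≠ s 1 := by linarith
      simp [h1, h2]
    · rintro _ ⟨t, rfl⟩
      split_ifs with h1 h2 h3
      · exact absurd h1 (h2 ▸ hs.not_gt)
      · exact absurd (h1.trans h3) hs.not_gt
      · exact le_rfl
      · exact le_top

/-- Affine normalisation sending `m` to `0` and `a > m` to `1`. -/
lemma Clone.Rabc_normalise {a m : ℚ} (hma : m < a) {c : WithTop ℚ} (h : Clone Γ (Rabc a m c)) :
    Clone Γ (Rabc 1 0 (((a - m)⁻¹ : ℚ) * (c + ((-m : ℚ) : WithTop ℚ)))) := by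
  have hpos : 0 < a - m := sub_pos.2 hma
  convert (h.shift (-m)).scale (a - m)⁻¹ (inv_nonneg.2 hpos.le) using 2 with x
  simp only [Rabc]
  split_ifs
  · rw [← WithTop.coe_add, ← WithTop.coe_mul, ← sub_eq_add_neg, inv_mul_cancel₀ hpos.ne',
      WithTop.coe_one]
  · rw [← WithTop.coe_add, ← WithTop.coe_mul, add_neg_cancel, mul_zero, WithTop.coe_zero]
  · rfl

lemma Clone.ne_of_Rabc {a m : ℚ} (hma : m < a) (h : Clone Γ (Rabc a m m)) :
    Clone Γ (fun t : Fin 2 → ℚ => if t 0 = t 1 then (1 : WithTop ℚ) else 0) := by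
  convert Clone.Rabc_normalise hma h using 2 with x
  rw [← WithTop.coe_add, ← WithTop.coe_mul, add_neg_cancel, mul_zero, WithTop.coe_zero]
  simp [Rabc]

lemma Clone.lt_of_Rabc {a m : ℚ} (hma : m < a) (h : Clone Γ (Rabc a m ⊤)) :
    Clone Γ (Rabc 1 0 ⊤) := by
  have := Clone.Rabc_normalise hma h
  rwa [WithTop.top_add, WithTop.mul_top] at this
  exact_mod_cast inv_ne_zero (sub_pos.2 hma).ne'

/-- If the value on `x > y` is finite but not minimal, then `(≠)₀¹` lies in the clone. -/
lemma Clone.ne_of_min_lt (hlt : Clone Γ (crisp LtS)) {a b c : WithTop ℚ}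
    (h : Clone Γ (Rabc a b c)) (hc : c ≠ ⊤) (hm : min a (min b c) < c) :
    Clone Γ (fun t : Fin 2 → ℚ => if t 0 = t 1 then (1 : WithTop ℚ) else 0) := by
  have h1 := Clone.Rabc_comp hlt h
  lift c to ℚ using hc
  generalize min a (min b (c : WithTop ℚ)) = m at hm h1
  lift m to ℚ using hm.ne_top
  have hmc : m < c := WithTop.coe_lt_coe.1 hm
  -- The symmetrisation of `R_{c,m,c}` is `R_{2c,m+c,m+c}`.
  refine Clone.ne_of_Rabc (a := c + c) (m := m + c) (by linarith) ?_
  convert h1.add h1.Rabc_swap using 2 with x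
  simp only [Rabc]
  split_ifs <;> simp [add_comm]

lemma Clone.of_twoValued_two (hT : ∀ p ∈ Γ, Temporal p.2) (hlt : Clone Γ (crisp LtS))
    (h : TwoValued Γ 2) :
    Clone Γ (fun t : Fin 2 → ℚ => if t 0 = t 1 then (1 : WithTop ℚ) else 0) ∨
      Clone Γ (Rabc 1 0 ⊤) := by
  obtain ⟨R, hR, s, t, hs, ht, hst⟩ := h
  obtain ⟨a, b, c, rfl⟩ : ∃ a b c, R = Rabc a b c := ⟨_, _, _, hR.Rabc_eq hT⟩
  by_cases hc : c ≠ ⊤ ∧ min a (min b c) < c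
  · exact Or.inl (Clone.ne_of_min_lt hlt hR hc.1 hc.2)
  by_cases hb : b ≠ ⊤ ∧ min a (min c b) < b
  · exact Or.inl (Clone.ne_of_min_lt hlt hR.Rabc_swap hb.1 hb.2)
  have hc' : c = ⊤ ∨ c ≤ a ∧ c ≤ b := by
    by_cases h : c = ⊤
    · exact Or.inl h
    · have := not_lt.1 fun h' => hc ⟨h, h'⟩
      exact Or.inr ⟨this.trans (min_le_left _ _),
        this.trans ((min_le_right _ _).trans (min_le_left _ _))⟩
  have hb' : b = ⊤ ∨ b ≤ a ∧ b ≤ c := by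
    by_cases h : b = ⊤
    · exact Or.inl h
    · have := not_lt.1 fun h' => hb ⟨h, h'⟩
      exact Or.inr ⟨this.trans (min_le_left _ _),
        this.trans ((min_le_right _ _).trans (min_le_left _ _))⟩
  have hval : ∀ x, Rabc a b c x = a ∨ Rabc a b c x = b ∨ Rabc a b c x = c := by
    intro x
    unfold Rabc
    split_ifs <;> simp
  -- Since two finite values occur and `b`, `c` are infinite or minimal, `a` is finite, and at
  -- least one of `b`, `c` is finite and smaller.
  have hfin : a ≠ ⊤ ∧ (b < a ∨ c < a) := by
    by_contra hcon
    have hbc : b ≠ ⊤ → c ≠ ⊤ → b = c := fun h1 h2 =>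
      le_antisymm (hb'.resolve_left h1).2 (hc'.resolve_left h2).2
    have hab : a ≠ ⊤ → b ≠ ⊤ → a = b := fun h1 h2 =>
      le_antisymm (not_lt.1 fun h => hcon ⟨h1, Or.inl h⟩) (hb'.resolve_left h2).1
    have hac : a ≠ ⊤ → c ≠ ⊤ → a = c := fun h1 h2 =>
      le_antisymm (not_lt.1 fun h => hcon ⟨h1, Or.inr h⟩) (hc'.resolve_left h2).1
    have hvs := hval s
    have hvt := hval t
    grind
  obtain ⟨ha, hbc⟩ := hfin
  lift a to ℚ using ha
  rcases hbc with hba | hca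
  · lift b to ℚ using hba.ne_top
    have hba' : b < a := WithTop.coe_lt_coe.1 hba
    rcases hc' with rfl | hc'
    · exact Or.inr (Clone.lt_of_Rabc hba' hR)
    · have : c = b := le_antisymm hc'.2 (hb'.resolve_left (WithTop.coe_ne_top)).2
      subst this
      exact Or.inl (Clone.ne_of_Rabc hba' hR)
  · lift c to ℚ using hca.ne_top
    have hca' : c < a := WithTop.coe_lt_coe.1 hca
    rcases hb' with rfl | hb'
    · exact Or.inr (Clone.lt_of_Rabc hca' hR.Rabc_swap)
    · have : b = c := le_antisymm hb'.2 (hc'.resolve_left (WithTop.coe_ne_top)).2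
      subst this
      exact Or.inl (Clone.ne_of_Rabc hca' hR)

end Binary

/-- If `⟨Γ⟩` contains crisp `<` and some relation of the set `Γ` of temporal valued
relations attains two distinct finite values, then `⟨Γ⟩` contains `Cyc`, `(≠)₀¹` or
`R_{1,0,∞}`. -/
theorem stmt12 (Γ : Set ((k : ℕ) × VRel k)) (hT : ∀ p ∈ Γ, Temporal p.2)
    (hlt : Clone Γ (crisp LtS))
    (h2 : ∃ p ∈ Γ, ∃ s t : Fin p.1 → ℚ, p.2 s ≠ ⊤ ∧ p.2 t ≠ ⊤ ∧ p.2 s ≠ p.2 t) :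
    Clone Γ (crisp CycS) ∨
      Clone Γ (fun t : Fin 2 → ℚ => if t 0 = t 1 then (1 : WithTop ℚ) else 0) ∨
      Clone Γ (Rabc 1 0 ⊤) := by
  obtain ⟨⟨n, R⟩, hR, s, t, hs, ht, hst⟩ := h2
  exact Or.inr (Clone.of_twoValued_two hT hlt
    (TwoValued.two hT hlt n ⟨R, .base hR, s, t, hs, ht, hst⟩))
end
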